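/- arXiv:2102.01002 — 2 statements merged into one kernel-verified Lean document; each statement's English description precedes it below -/
import Mathlib

section
/- Let X ⊆ ℝⁿ be a nonempty convex compact set and f : ℝⁿ → ℝ be convex on X and differentiable at every point of X, with gradient ∇f. Define f_*(g) := sup_{x∈X} (⟨g,x⟩ − f(x)) and Z := {(t,g,x) ∈ ℝ × ℝⁿ × ℝⁿ : x ∈ X and f(x) + f_*(g) ≤ t}. Then: (a) Z ⊆ 𝓕[∇f, X]; and (b) for every x ∈ X, the triple (⟨∇f(x), x⟩, ∇f(x), x) belongs to Z, i.e., f_*(∇f(x)) = ⟨∇f(x), x⟩ − f(x). -/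
open scoped RealInnerProductSpace

/-!
A subgradient `v` of `f` at `x` is exactly a vector for which `x` maximizes `⟪v, ·⟫ - f`, so the
conjugate at `v` is the value there. If `f x + f* g ≤ t`, then adding the subgradient inequality
based at `y`, `⟪F y, x - y⟫ ≤ f x - f y`, to the Fenchel–Young inequality `⟪g, y⟫ - f y ≤ f* g`
makes `f y` cancel. A gradient of a convex function is a subgradient because secant slopes along
a segment dominate the derivative at its starting point.
-/

open Set

section NormedSpace

variable {E : Type*} [NormedAddCommGroup E] [NormedSpace ℝ E]

theorem add_le_of_convexOn_of_hasFDerivWithinAt {X : Set E} {f : E → ℝ} {f' : StrongDual ℝ E}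
    {x y : E} (hf : ConvexOn ℝ X f) (hf' : HasFDerivWithinAt f f' X x)
    (hx : x ∈ X) (hy : y ∈ X) :
    f x + f' (y - x) ≤ f y := by
  let line : ℝ →ᵃ[ℝ] E := AffineMap.lineMap x y
  have line_zero : line 0 = x := AffineMap.lineMap_apply_zero x y
  have line_one : line 1 = y := AffineMap.lineMap_apply_one x y
  have hderiv : HasDerivWithinAt (f ∘ line) (f' (y - x)) (line ⁻¹' X) 0 :=
    hf'.comp_hasDerivWithinAt_of_eq 0 AffineMap.hasDerivWithinAt_lineMap
      (mapsTo_preimage line X) line_zero.symm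
  have hslope : f' (y - x) ≤ slope (f ∘ line) 0 1 :=
    (hf.comp_affineMap line).le_slope_of_hasDerivWithinAt (by simpa [line_zero])
      (by simpa [line_one]) one_pos hderiv
  simp only [slope_def_field, Function.comp_apply, line_zero, line_one, sub_zero, div_one]
    at hslope
  linarith

end NormedSpace

section InnerProductSpace

variable {E : Type*} [NormedAddCommGroup E] [InnerProductSpace ℝ E]
  {X : Set E} {f : E → ℝ} {F : E → E} {g v x y : E}

/-- `v` is a subgradient at `x` of the restriction of `f` to `X`. -/
def IsSubgradientOn (f : E → ℝ) (X : Set E) (v x : E) : Prop :=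
  ∀ y ∈ X, f x + ⟪v, y - x⟫ ≤ f y

/-- The Fenchel transform of `f` over `X`. Being a real supremum, it is meaningful at `g` only
when `⟪g, ·⟫ - f` is bounded above on the nonempty set `X`. -/
noncomputable def fenchelConjOn (f : E → ℝ) (X : Set E) (g : E) : ℝ :=
  sSup ((fun x => ⟪g, x⟫ - f x) '' X)

/-- The triples `(t, g, x)` with `x ∈ X` for which `t` bounds the Fenchel–Young sum of `x` and `g`;
this is the set `Z` of the paper. -/
def fenchelYoungSet (f : E → ℝ) (X : Set E) : Set (ℝ × E × E) :=
  {p | p.2.2 ∈ X ∧ f p.2.2 + fenchelConjOn f X p.2.1 ≤ p.1}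

/-- The set `𝓕[F, X]` of the paper. For `g = 0` and `t = 0` its condition on `x` is the Minty
variational inequality for `F` on `X`. -/
def mintySet (F : E → E) (X : Set E) : Set (ℝ × E × E) :=
  {p | p.2.2 ∈ X ∧ ∀ y ∈ X, ⟪F y, p.2.2 - y⟫ ≤ p.1 - ⟪p.2.1, y⟫}

theorem inner_sub_le_fenchelConjOn (hbdd : BddAbove ((fun x => ⟪g, x⟫ - f x) '' X))
    (hx : x ∈ X) : ⟪g, x⟫ - f x ≤ fenchelConjOn f X g :=
  le_csSup hbdd (mem_image_of_mem _ hx)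

namespace IsSubgradientOn

theorem of_convexOn_of_hasGradientWithinAt [CompleteSpace E] (hf : ConvexOn ℝ X f)
    (hv : HasGradientWithinAt f v X x) (hx : x ∈ X) : IsSubgradientOn f X v x :=
  fun _ hy =>
    add_le_of_convexOn_of_hasFDerivWithinAt hf hv.hasFDerivWithinAt hx hy

theorem inner_sub_le (hv : IsSubgradientOn f X v x) (hy : y ∈ X) :
    ⟪v, y⟫ - f y ≤ ⟪v, x⟫ - f x := by
  have h := hv y hy
  rw [inner_sub_right] at h
  linarith

theorem fenchelConjOn_eq (hv : IsSubgradientOn f X v x) (hx : x ∈ X) :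
    fenchelConjOn f X v = ⟪v, x⟫ - f x :=
  IsGreatest.csSup_eq ⟨mem_image_of_mem _ hx, forall_mem_image.2 fun _ => hv.inner_sub_le⟩

theorem mem_fenchelYoungSet (hv : IsSubgradientOn f X v x) (hx : x ∈ X) :
    (⟪v, x⟫, v, x) ∈ fenchelYoungSet f X :=
  ⟨hx, by simp only [hv.fenchelConjOn_eq hx, add_sub_cancel, le_refl]⟩

theorem bddAbove_inner_sub (hv : IsSubgradientOn f X v x) (hX : Bornology.IsBounded X) (g : E) :
    BddAbove ((fun y => ⟪g, y⟫ - f y) '' X) := by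
  obtain ⟨R, hR⟩ := hX.exists_norm_le
  refine ⟨‖g - v‖ * R + (⟪v, x⟫ - f x), forall_mem_image.2 fun y hy => ?_⟩
  calc ⟪g, y⟫ - f y = ⟪g - v, y⟫ + (⟪v, y⟫ - f y) := by rw [inner_sub_left]; ring
    _ ≤ ‖g - v‖ * ‖y‖ + (⟪v, x⟫ - f x) :=
      add_le_add (real_inner_le_norm _ _) (hv.inner_sub_le hy)
    _ ≤ ‖g - v‖ * R + (⟪v, x⟫ - f x) := by gcongr; exact hR y hy

end IsSubgradientOn

theorem fenchelYoungSet_subset_mintySet (hF : ∀ y ∈ X, IsSubgradientOn f X (F y) y)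
    (hbdd : ∀ g : E, BddAbove ((fun x => ⟪g, x⟫ - f x) '' X)) :
    fenchelYoungSet f X ⊆ mintySet F X := by
  rintro ⟨t, g, x⟩ ⟨hx, ht : f x + fenchelConjOn f X g ≤ t⟩
  refine ⟨hx, fun y hy => ?_⟩
  calc ⟪F y, x - y⟫ ≤ f x - f y := le_sub_iff_add_le'.2 (hF y hy x hx)
    _ ≤ t - ⟪g, y⟫ := by linarith [inner_sub_le_fenchelConjOn (hbdd g) hy]

theorem stmt_9_general (hF : ∀ x ∈ X, IsSubgradientOn f X (F x) x)
    (hbdd : ∀ g : E, BddAbove ((fun x => ⟪g, x⟫ - f x) '' X)) :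
    fenchelYoungSet f X ⊆ mintySet F X ∧
      ∀ x ∈ X, fenchelConjOn f X (F x) = ⟪F x, x⟫ - f x ∧
        (⟪F x, x⟫, F x, x) ∈ fenchelYoungSet f X :=
  ⟨fenchelYoungSet_subset_mintySet hF hbdd,
    fun x hx => ⟨(hF x hx).fenchelConjOn_eq hx, (hF x hx).mem_fenchelYoungSet hx⟩⟩

end InnerProductSpace

theorem stmt_9 {n : ℕ} (X : Set (EuclideanSpace ℝ (Fin n))) (hne : X.Nonempty)
    (hconv : Convex ℝ X) (hcomp : IsCompact X)
    (f : EuclideanSpace ℝ (Fin n) → ℝ)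
    (hconvf : ConvexOn ℝ X f)
    (hdiff : ∀ x ∈ X, DifferentiableAt ℝ f x)
    (fstar : EuclideanSpace ℝ (Fin n) → ℝ)
    (hfstar : ∀ g : EuclideanSpace ℝ (Fin n),
      fstar g = sSup {v : ℝ | ∃ x ∈ X, v = ⟪g, x⟫ - f x})
    (Z : Set (ℝ × EuclideanSpace ℝ (Fin n) × EuclideanSpace ℝ (Fin n)))
    (hZ : Z = {p | p.2.2 ∈ X ∧ f p.2.2 + fstar p.2.1 ≤ p.1}) :
    -- (a) Z ⊆ 𝓕[∇f, X]
    (∀ p ∈ Z, p.2.2 ∈ X ∧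
      ∀ y ∈ X, ⟪gradient f y, p.2.2 - y⟫ ≤ p.1 - ⟪p.2.1, y⟫) ∧
    -- (b) the canonical triple belongs to Z
    (∀ x ∈ X, fstar (gradient f x) = ⟪gradient f x, x⟫ - f x ∧
      (⟪gradient f x, x⟫, gradient f x, x) ∈ Z) := by
  obtain rfl : fstar = fenchelConjOn f X :=
    funext fun g => by simp only [hfstar, fenchelConjOn, image, eq_comm]
  have hsub : ∀ x ∈ X, IsSubgradientOn f X (gradient f x) x := fun x hx =>
    .of_convexOn_of_hasGradientWithinAt hconvf
      (hasGradientWithinAt_iff_hasFDerivWithinAt.2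
        (hdiff x hx).hasGradientAt.hasFDerivAt.hasFDerivWithinAt) hx
  obtain ⟨x₀, hx₀⟩ := hne
  rw [hZ]
  exact stmt_9_general hsub ((hsub x₀ hx₀).bddAbove_inner_sub hcomp.isBounded)
end

section
/- Let X ⊆ ℝⁿ be a nonempty set, F : X → ℝⁿ a map, and T ⊆ ℝ × ℝⁿ × ℝⁿ represent (F,X), i.e., T ⊆ 𝓕[F,X] and (⟨F(x),x⟩, F(x), x) ∈ T for all x ∈ X. Let A : ℝ^l → ℝⁿ be a linear map, a ∈ ℝⁿ, Ξ := {ξ ∈ ℝ^l : Aξ + a ∈ X}, and Φ(ξ) := Aᵀ F(Aξ + a) for ξ ∈ Ξ, where Aᵀ is the adjoint of A. Then: (a) Φ is monotone on Ξ whenever F is monotone on X; and (b) the set T' := {(τ, γ, ξ) ∈ ℝ × ℝ^l × ℝ^l : there exist t ∈ ℝ, g ∈ ℝⁿ with (t, g, Aξ + a) ∈ T, τ = t − ⟨g, a⟩, and γ = Aᵀg} represents (Φ, Ξ): T' ⊆ 𝓕[Φ, Ξ] and (⟨Φ(ξ), ξ⟩, Φ(ξ), ξ) ∈ T' for all ξ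 ∈ Ξ. -/
open Matrix

/-!
Adjointness of `A'` to `A` gives `⟨A' g, ξ - η⟩ = ⟨g, (A ξ + a) - (A η + a)⟩`, so monotonicity
and the inequalities defining `𝓕[Φ, Ξ]` are those of `F` at points of the form `A ξ + a`. The
shift `τ = t - ⟨g, a⟩` absorbs the translation: `τ - ⟨A' g, η⟩ = t - ⟨g, A η + a⟩`.
-/

section Pairing

variable {R E E' W W' : Type*} [CommRing R]
  [AddCommGroup E] [Module R E] [AddCommGroup E'] [Module R E']
  [AddCommGroup W] [Module R W] [AddCommGroup W'] [Module R W']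

section Definitions

variable (B : E' →ₗ[R] E →ₗ[R] R)

/-- Monotonicity on `X` of an operator `F` with values in a space `E'` paired with `E` by `B`;
for the inner product of `ℝⁿ` this is the usual notion of a monotone operator. -/
def IsMonotoneOperatorOn [Preorder R] (F : E → E') (X : Set E) : Prop :=
  ∀ x ∈ X, ∀ y ∈ X, 0 ≤ B (F x - F y) (x - y)

/-- The set `𝓕[F, X]` of triples `(t, g, x)`: the part over `x ∈ X` of the epigraph of the
Fitzpatrick function `(g, x) ↦ sup_{y ∈ X} (⟨F y, x - y⟩ + ⟨g, y⟩)` of `F` on `X`. -/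
def fitzpatrickEpigraph [Preorder R] (F : E → E') (X : Set E) : Set (R × E' × E) :=
  {p | p.2.2 ∈ X ∧ ∀ y ∈ X, B (F y) (p.2.2 - y) ≤ p.1 - B p.2.1 y}

/-- `T` represents `(F, X)`: it lies between the canonical triples `(⟨F x, x⟩, F x, x)`, `x ∈ X`,
and `𝓕[F, X]`. -/
structure Represents [Preorder R] (T : Set (R × E' × E)) (F : E → E') (X : Set E) : Prop where
  subset_fitzpatrickEpigraph : T ⊆ fitzpatrickEpigraph B F X
  canonical_mem : ∀ x ∈ X, (B (F x) x, F x, x) ∈ T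

/-- The set of triples obtained from `T` by the substitution `x = A ξ + a`. The map `A'` stands
for the adjoint of `A`; adjointness is a hypothesis of the lemmas. -/
def affineSubstitution (A : W →ₗ[R] E) (A' : E' →ₗ[R] W') (a : E) (T : Set (R × E' × E)) :
    Set (R × W' × W) :=
  {p | ∃ (t : R) (g : E'), (t, g, A p.2.2 + a) ∈ T ∧ p.1 = t - B g a ∧ p.2.1 = A' g}

end Definitions

variable {B : E' →ₗ[R] E →ₗ[R] R} {C : W' →ₗ[R] W →ₗ[R] R}
  {A : W →ₗ[R] E} {A' : E' →ₗ[R] W'}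

theorem adjoint_apply_sub (hA : ∀ g ξ, C (A' g) ξ = B g (A ξ)) (a : E) (g : E') (ξ η : W) :
    C (A' g) (ξ - η) = B g ((A ξ + a) - (A η + a)) := by
  rw [hA, map_sub, add_sub_add_right_eq_sub]

theorem sub_apply_sub_adjoint_apply (hA : ∀ g ξ, C (A' g) ξ = B g (A ξ))
    (a : E) (t : R) (g : E') (η : W) :
    t - B g a - C (A' g) η = t - B g (A η + a) := by
  rw [hA, map_add, sub_sub, add_comm]

theorem affineSubstitution_mono {S T : Set (R × E' × E)} (hST : S ⊆ T) (a : E) :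
    affineSubstitution B A A' a S ⊆ affineSubstitution B A A' a T :=
  fun _ ⟨t, g, hmem, ht, hg⟩ ↦ ⟨t, g, hST hmem, ht, hg⟩

theorem canonical_mem_affineSubstitution (hA : ∀ g ξ, C (A' g) ξ = B g (A ξ))
    {T : Set (R × E' × E)} {a : E} {g : E'} {ξ : W} (h : (B g (A ξ + a), g, A ξ + a) ∈ T) :
    (C (A' g) ξ, A' g, ξ) ∈ affineSubstitution B A A' a T := by
  refine ⟨_, _, h, ?_, rfl⟩
  rw [hA, map_add, add_sub_cancel_right]

variable [Preorder R] {F : E → E'} {X : Set E} {T : Set (R × E' × E)}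

theorem IsMonotoneOperatorOn.comp_affine (hF : IsMonotoneOperatorOn B F X)
    (hA : ∀ g ξ, C (A' g) ξ = B g (A ξ)) (a : E) :
    IsMonotoneOperatorOn C (fun ξ ↦ A' (F (A ξ + a))) {ξ | A ξ + a ∈ X} := by
  intro ξ hξ η hη
  rw [← map_sub A', adjoint_apply_sub hA a]
  exact hF _ hξ _ hη

theorem affineSubstitution_fitzpatrickEpigraph_subset (hA : ∀ g ξ, C (A' g) ξ = B g (A ξ))
    (a : E) :
    affineSubstitution B A A' a (fitzpatrickEpigraph B F X) ⊆
      fitzpatrickEpigraph C (fun ξ ↦ A' (F (A ξ + a))) {ξ | A ξ + a ∈ X} := by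
  rintro ⟨_, _, ξ⟩ ⟨t, g, ⟨hξ, hle⟩, rfl, rfl⟩
  refine ⟨hξ, fun η hη ↦ ?_⟩
  rw [adjoint_apply_sub hA a, sub_apply_sub_adjoint_apply hA]
  exact hle _ hη

theorem Represents.comp_affine (hT : Represents B T F X)
    (hA : ∀ g ξ, C (A' g) ξ = B g (A ξ)) (a : E) :
    Represents C (affineSubstitution B A A' a T)
      (fun ξ ↦ A' (F (A ξ + a))) {ξ | A ξ + a ∈ X} where
  subset_fitzpatrickEpigraph :=
    (affineSubstitution_mono hT.subset_fitzpatrickEpigraph a).trans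
      (affineSubstitution_fitzpatrickEpigraph_subset hA a)
  canonical_mem _ hξ := canonical_mem_affineSubstitution hA (hT.canonical_mem _ hξ)

theorem stmt_15_general (hT : Represents B T F X) (hA : ∀ g ξ, C (A' g) ξ = B g (A ξ)) (a : E) :
    (IsMonotoneOperatorOn B F X →
      IsMonotoneOperatorOn C (fun ξ ↦ A' (F (A ξ + a))) {ξ | A ξ + a ∈ X}) ∧
    Represents C (affineSubstitution B A A' a T)
      (fun ξ ↦ A' (F (A ξ + a))) {ξ | A ξ + a ∈ X} :=
  ⟨fun hF ↦ hF.comp_affine hA a, hT.comp_affine hA a⟩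

end Pairing

theorem dotProductBilin_transpose_mulVecLin {R m n : Type*} [CommSemiring R] [Fintype m]
    [Fintype n] (A : Matrix m n R) (g : m → R) (ξ : n → R) :
    dotProductBilin R R (Aᵀ.mulVecLin g) ξ = dotProductBilin R R g (A.mulVecLin ξ) :=
  (dotProduct_comm _ _).trans (dotProduct_transpose_mulVec A ξ g)

theorem stmt_15 {n l : ℕ} (X : Set (Fin n → ℝ)) (hne : X.Nonempty)
    (F : (Fin n → ℝ) → (Fin n → ℝ))
    (T : Set (ℝ × (Fin n → ℝ) × (Fin n → ℝ)))
    -- T ⊆ 𝓕[F,X] (with the standard inner product ⬝ᵥ on ℝⁿ) ...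
    (hT1 : ∀ p ∈ T, p.2.2 ∈ X ∧
      ∀ y ∈ X, (F y) ⬝ᵥ (p.2.2 - y) ≤ p.1 - p.2.1 ⬝ᵥ y)
    -- ... and contains the canonical triples
    (hT2 : ∀ x ∈ X, ((F x) ⬝ᵥ x, F x, x) ∈ T)
    (A : Matrix (Fin n) (Fin l) ℝ) (a : Fin n → ℝ)
    (Ξ : Set (Fin l → ℝ)) (hΞ : Ξ = {ξ | A.mulVec ξ + a ∈ X})
    (Φ : (Fin l → ℝ) → (Fin l → ℝ))
    (hΦ : ∀ ξ, Φ ξ = Aᵀ.mulVec (F (A.mulVec ξ + a)))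
    (T' : Set (ℝ × (Fin l → ℝ) × (Fin l → ℝ)))
    (hT' : T' = {p | ∃ (t : ℝ) (g : Fin n → ℝ),
      (t, g, A.mulVec p.2.2 + a) ∈ T ∧ p.1 = t - g ⬝ᵥ a ∧ p.2.1 = Aᵀ.mulVec g}) :
    -- (a) Φ is monotone on Ξ whenever F is monotone on X
    ((∀ x ∈ X, ∀ y ∈ X, 0 ≤ (F x - F y) ⬝ᵥ (x - y)) →
      ∀ ξ ∈ Ξ, ∀ η ∈ Ξ, 0 ≤ (Φ ξ - Φ η) ⬝ᵥ (ξ - η)) ∧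
    -- (b) T' ⊆ 𝓕[Φ, Ξ] and T' contains the canonical triples
    (∀ p ∈ T', p.2.2 ∈ Ξ ∧
      ∀ η ∈ Ξ, (Φ η) ⬝ᵥ (p.2.2 - η) ≤ p.1 - p.2.1 ⬝ᵥ η) ∧
    (∀ ξ ∈ Ξ, ((Φ ξ) ⬝ᵥ ξ, Φ ξ, ξ) ∈ T') := by
  subst hΞ hT'
  obtain rfl : Φ = fun ξ ↦ Aᵀ *ᵥ F (A *ᵥ ξ + a) := funext hΦ
  have hT : Represents (dotProductBilin ℝ ℝ) T F X := ⟨hT1, hT2⟩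
  obtain ⟨hmono, hrep⟩ := stmt_15_general hT (dotProductBilin_transpose_mulVecLin A) a
  exact ⟨hmono, hrep.subset_fitzpatrickEpigraph, hrep.canonical_mem⟩
end
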